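/- arXiv:math/0405317 — 3 statements merged into one kernel-verified Lean document; each statement's English description precedes it below -/
import Mathlib

section
/- Let ρ ≥ 1 be an integer, let N_1,…,N_ρ be positive real numbers, let a > 0 and t₀ ∈ ℝ, and let ψ : [t₀, t₀ + 1] × [0,a]^ρ → ℂ be continuous. Then lim_{t → t₀⁺} (t − t₀)^ρ ∫_{[0,a]^ρ} (∏_{i=1}^ρ z_i^{N_i (t − t₀) − 1}) ψ(t, z) dz = ψ(t₀, 0) / ∏_{i=1}^ρ N_i. -/
open MeasureTheory Filter Topology

noncomputable section

/-!
The weight `∏ (t - t₀) N_i z_i ^ (N_i (t - t₀) - 1)` has mass `∏ a ^ (N_i (t - t₀)) → 1` on the cube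
`[0,a]^ρ` and concentrates at the origin as `t → t₀⁺`. It does not tend to zero uniformly away from
the origin (it blows up along every face `z_i = 0`), so concentration is measured by first moments:
multiplying by `z_j` shifts the `j`-th exponent by one, which removes one of the `ρ` poles, and the
rescaled moment tends to `0` (`tendsto_scaled_weight`).

By compactness, `‖ψ t z - ψ t₀ 0‖ ≤ ε + C ∑ z_j` on the cube for `t` near `t₀`
(`exists_norm_sub_le`), so the limit follows by integrating this bound against the weight; all the
integrals involved are products of one-dimensional power integrals (`integral_weight`).
-/

theorem integral_rpow_sub_one {a r : ℝ} (ha : 0 < a) (hr : 0 < r) :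
    ∫ x in Set.Icc (0 : ℝ) a, x ^ (r - 1) = a ^ r / r := by
  rw [integral_Icc_eq_integral_Ioc, ← intervalIntegral.integral_of_le ha.le,
    integral_rpow (Or.inl (by linarith))]
  simp [Real.zero_rpow hr.ne']

theorem integrableOn_rpow_sub_one {a r : ℝ} (ha : 0 < a) (hr : 0 < r) :
    IntegrableOn (fun x : ℝ => x ^ (r - 1)) (Set.Icc (0 : ℝ) a) := by
  rw [integrableOn_Icc_iff_integrableOn_Ioc,
    ← intervalIntegrable_iff_integrableOn_Ioc_of_le ha.le]
  exact intervalIntegral.intervalIntegrable_rpow' (by linarith)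

theorem restrict_cube (ρ : ℕ) (a : ℝ) :
    (volume : Measure (Fin ρ → ℝ)).restrict (Set.univ.pi fun _ : Fin ρ => Set.Icc (0 : ℝ) a) =
      Measure.pi fun _ : Fin ρ => (volume : Measure ℝ).restrict (Set.Icc (0 : ℝ) a) := by
  rw [volume_pi, Measure.restrict_pi_pi]

theorem integral_weight {ρ : ℕ} {a : ℝ} (ha : 0 < a) {r : Fin ρ → ℝ} (hr : ∀ i, 0 < r i) :
    ∫ z in Set.univ.pi fun _ : Fin ρ => Set.Icc (0 : ℝ) a, ∏ i, z i ^ (r i - 1) =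
      ∏ i, a ^ r i / r i := by
  rw [restrict_cube, integral_fintype_prod_eq_prod (fun i (x : ℝ) => x ^ (r i - 1))]
  exact Finset.prod_congr rfl fun i _ => integral_rpow_sub_one ha (hr i)

theorem integrableOn_weight {ρ : ℕ} {a : ℝ} (ha : 0 < a) {r : Fin ρ → ℝ} (hr : ∀ i, 0 < r i) :
    IntegrableOn (fun z : Fin ρ → ℝ => ∏ i, z i ^ (r i - 1))
      (Set.univ.pi fun _ : Fin ρ => Set.Icc (0 : ℝ) a) := by
  rw [IntegrableOn, restrict_cube]
  exact Integrable.fintype_prod (f := fun i (x : ℝ) => x ^ (r i - 1))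
    fun i => integrableOn_rpow_sub_one ha (hr i)

/-- On the closed cube, faces `z j = 0` included, multiplying the weight by a coordinate shifts
the corresponding exponent by one. -/
theorem weight_mul_coord {ρ : ℕ} {r : Fin ρ → ℝ} (hr : ∀ i, 0 < r i) {z : Fin ρ → ℝ}
    (hz : ∀ i, 0 ≤ z i) (j : Fin ρ) :
    (∏ i, z i ^ (r i - 1)) * z j = ∏ i, z i ^ ((r i + if i = j then 1 else 0) - 1) := by
  have hj : z j = ∏ i, if i = j then z i else 1 := by simp
  rw [hj, ← Finset.prod_mul_distrib]
  refine Finset.prod_congr rfl fun i _ => ?_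
  split_ifs with h
  · have h1 : r i - 1 + 1 = r i := by ring
    rw [add_sub_cancel_right]
    nth_rewrite 2 [← Real.rpow_one (z i)]
    rw [← Real.rpow_add' (hz i) (by rw [h1]; exact (hr i).ne'), h1]
  · simp

/-- With the factor `s ^ ρ` distributed over the coordinates, a coordinate with unshifted exponent
(`e i = 0`) contributes `1 / N i` in the limit, and one with nonzero shift contributes `0`. -/
theorem tendsto_scaled_weight {ρ : ℕ} {N : Fin ρ → ℝ} (hN : ∀ i, 0 < N i) {a : ℝ} (ha : 0 < a)
    (e : Fin ρ → ℝ) :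
    Tendsto (fun s : ℝ => s ^ ρ * ∏ i, a ^ (N i * s + e i) / (N i * s + e i)) (𝓝[>] 0)
      (𝓝 (∏ i, if e i = 0 then 1 / N i else 0)) := by
  have hfun : (fun s : ℝ => s ^ ρ * ∏ i, a ^ (N i * s + e i) / (N i * s + e i)) =
      fun s : ℝ => ∏ i, s * (a ^ (N i * s + e i) / (N i * s + e i)) := by
    funext s
    simp [Finset.prod_mul_distrib]
  rw [hfun]
  refine tendsto_finsetProd _ fun i _ => ?_
  have hlin : ContinuousAt (fun s : ℝ => N i * s + e i) 0 := by fun_prop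
  have hpow : ContinuousAt (fun s : ℝ => a ^ (N i * s + e i)) 0 :=
    continuousAt_const.rpow hlin (Or.inl ha.ne')
  split_ifs with h
  · have h1 : Tendsto (fun s : ℝ => a ^ (N i * s + e i) / N i) (𝓝[>] 0) (𝓝 (1 / N i)) := by
      have := (hpow.div_const (N i)).tendsto
      simp only [h, mul_zero, add_zero, Real.rpow_zero] at this
      simp only [h, add_zero]
      exact this.mono_left nhdsWithin_le_nhds
    refine h1.congr' ?_
    filter_upwards [self_mem_nhdsWithin] with s hs
    have hs' : s ≠ 0 := ne_of_gt hs
    have := (hN i).ne'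
    rw [h, add_zero]
    field_simp
  · have h1 : ContinuousAt (fun s : ℝ => s * (a ^ (N i * s + e i) / (N i * s + e i))) 0 :=
      continuousAt_id.mul (hpow.div hlin (by simpa using h))
    have := h1.tendsto
    simp only [zero_mul] at this
    exact this.mono_left nhdsWithin_le_nhds

/-- Near the corner `(t₀, 0)` continuity gives the bound `ε`; at the other points of the cube some
coordinate is at least `δ`, and the term `C ∑ z j` dominates the global bound of `ψ`. -/
theorem exists_norm_sub_le {ρ : ℕ} {a : ℝ} (ha : 0 < a) {t₀ : ℝ} {ψ : ℝ → (Fin ρ → ℝ) → ℂ}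
    (hψ : ContinuousOn (fun p : ℝ × (Fin ρ → ℝ) => ψ p.1 p.2)
      ((Set.Icc t₀ (t₀ + 1)) ×ˢ (Set.univ.pi fun _ : Fin ρ => Set.Icc (0 : ℝ) a)))
    {ε : ℝ} (hε : 0 < ε) :
    ∃ C : ℝ, ∀ᶠ t in 𝓝[>] t₀, ∀ z ∈ Set.univ.pi fun _ : Fin ρ => Set.Icc (0 : ℝ) a,
      ‖ψ t z - ψ t₀ 0‖ ≤ ε + C * ∑ j, z j := by
  have h0 : ((t₀, 0) : ℝ × (Fin ρ → ℝ)) ∈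
      (Set.Icc t₀ (t₀ + 1)) ×ˢ (Set.univ.pi fun _ : Fin ρ => Set.Icc (0 : ℝ) a) := by
    refine ⟨by simp, fun i _ => ?_⟩
    simp [ha.le]
  obtain ⟨M, hM⟩ := (isCompact_Icc.prod
    (isCompact_univ_pi fun _ : Fin ρ => isCompact_Icc)).exists_bound_of_continuousOn hψ
  obtain ⟨δ, hδ, hball⟩ := Metric.continuousOn_iff.1 hψ _ h0 ε hε
  have hM0 : 0 ≤ M := (norm_nonneg _).trans (hM _ h0)
  refine ⟨2 * M / δ, ?_⟩
  have hlt : t₀ < min (t₀ + 1) (t₀ + δ) := by simp [hδ]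
  filter_upwards [Ioo_mem_nhdsGT hlt] with t ht z hz
  have htI : t ∈ Set.Icc t₀ (t₀ + 1) := ⟨ht.1.le, (ht.2.trans_le (min_le_left _ _)).le⟩
  have htδ : t < t₀ + δ := ht.2.trans_le (min_le_right _ _)
  have hz0 : ∀ i, 0 ≤ z i := fun i => (hz i trivial).1
  by_cases hzδ : ∀ j, z j < δ
  · have hd : dist ((t, z) : ℝ × (Fin ρ → ℝ)) (t₀, 0) < δ := by
      rw [Prod.dist_eq, max_lt_iff]
      refine ⟨?_, (dist_pi_lt_iff hδ).2 fun i => ?_⟩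
      · rw [Real.dist_eq, abs_of_pos (by simpa using ht.1)]
        simp only
        linarith
      · simpa [Real.dist_eq, abs_of_nonneg (hz0 i)] using hzδ i
    have h1 := hball (t, z) ⟨htI, hz⟩ hd
    rw [dist_eq_norm] at h1
    have h2 : 0 ≤ 2 * M / δ * ∑ j, z j :=
      mul_nonneg (by positivity) (Finset.sum_nonneg fun i _ => hz0 i)
    exact h1.le.trans (by linarith)
  · push Not at hzδ
    obtain ⟨j, hj⟩ := hzδ
    have h1 : δ ≤ ∑ j, z j :=
      hj.trans (Finset.single_le_sum (fun i _ => hz0 i) (Finset.mem_univ j))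
    calc ‖ψ t z - ψ t₀ 0‖ ≤ ‖ψ t z‖ + ‖ψ t₀ 0‖ := norm_sub_le _ _
      _ ≤ M + M := add_le_add (hM (t, z) ⟨htI, hz⟩) (hM (t₀, 0) h0)
      _ = 2 * M / δ * δ := by field_simp; ring
      _ ≤ 2 * M / δ * ∑ j, z j := by gcongr
      _ ≤ ε + 2 * M / δ * ∑ j, z j := by linarith

/-- A pointwise bound `ε + C ∑ z j` on `g - c` integrates, against the weight, to a bound by the
mass and the first moments of the weight. -/
theorem norm_integral_weight_sub_le {ρ : ℕ} {a : ℝ} (ha : 0 < a) {r : Fin ρ → ℝ}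
    (hr : ∀ i, 0 < r i) {g : (Fin ρ → ℝ) → ℂ}
    (hg : ContinuousOn g (Set.univ.pi fun _ : Fin ρ => Set.Icc (0 : ℝ) a)) {c : ℂ} {ε C : ℝ}
    (hb : ∀ z ∈ Set.univ.pi fun _ : Fin ρ => Set.Icc (0 : ℝ) a,
      ‖g z - c‖ ≤ ε + C * ∑ j, z j) :
    ‖(∫ z in Set.univ.pi fun _ : Fin ρ => Set.Icc (0 : ℝ) a,
        ((∏ i, z i ^ (r i - 1) : ℝ) : ℂ) * g z) - ((∏ i, a ^ r i / r i : ℝ) : ℂ) * c‖ ≤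
      ε * ∏ i, a ^ r i / r i +
        C * ∑ j, ∏ i, a ^ (r i + if i = j then 1 else 0) / (r i + if i = j then 1 else 0) := by
  set K := Set.univ.pi fun _ : Fin ρ => Set.Icc (0 : ℝ) a with hK
  have hKc : IsCompact K := isCompact_univ_pi fun _ => isCompact_Icc
  have hKm : MeasurableSet K := hKc.measurableSet
  have hr' : ∀ j i : Fin ρ, 0 < r i + if i = j then (1 : ℝ) else 0 := fun j i => by
    have := hr i
    split_ifs <;> linarith
  have hW := integrableOn_weight ha hr
  have hWC : IntegrableOn (fun z : Fin ρ → ℝ => ((∏ i, z i ^ (r i - 1) : ℝ) : ℂ)) K := hW.ofReal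
  have hWg : IntegrableOn (fun z : Fin ρ → ℝ => ((∏ i, z i ^ (r i - 1) : ℝ) : ℂ) * g z) K := by
    exact hWC.mul_continuousOn hg hKc
  have hWc : IntegrableOn (fun z : Fin ρ → ℝ => ((∏ i, z i ^ (r i - 1) : ℝ) : ℂ) * c) K :=
    hWC.mul_const c
  have hmass : ((∏ i, a ^ r i / r i : ℝ) : ℂ) * c =
      ∫ z in K, ((∏ i, z i ^ (r i - 1) : ℝ) : ℂ) * c := by
    rw [integral_mul_const, integral_complex_ofReal, integral_weight ha hr]
  have hsum : IntegrableOn (fun z : Fin ρ → ℝ =>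
      ∑ j, ∏ i, z i ^ ((r i + if i = j then 1 else 0) - 1)) K :=
    integrable_finsetSum _ fun j _ => integrableOn_weight ha (hr' j)
  have hbound : ε * ∏ i, a ^ r i / r i +
        C * ∑ j, ∏ i, a ^ (r i + if i = j then 1 else 0) / (r i + if i = j then 1 else 0) =
      ∫ z in K, (ε * ∏ i, z i ^ (r i - 1) +
        C * ∑ j, ∏ i, z i ^ ((r i + if i = j then 1 else 0) - 1)) := by
    rw [integral_add (hW.const_mul ε) (hsum.const_mul C), integral_const_mul, integral_const_mul,
      integral_finsetSum _ fun j _ => integrableOn_weight ha (hr' j), integral_weight ha hr]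
    congr 2
    exact Finset.sum_congr rfl fun j _ => (integral_weight ha (hr' j)).symm
  rw [hmass, ← integral_sub hWg hWc, hbound]
  refine norm_integral_le_of_norm_le ((hW.const_mul ε).add (hsum.const_mul C)) ?_
  filter_upwards [ae_restrict_mem hKm] with z hz
  have hz0 : ∀ i, 0 ≤ z i := fun i => (hz i trivial).1
  have hw0 : 0 ≤ ∏ i, z i ^ (r i - 1) :=
    Finset.prod_nonneg fun i _ => Real.rpow_nonneg (hz0 i) _
  rw [← mul_sub, norm_mul, Complex.norm_real, Real.norm_of_nonneg hw0]
  simp_rw [← weight_mul_coord hr hz0, ← Finset.mul_sum]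
  calc _ ≤ (∏ i, z i ^ (r i - 1)) * (ε + C * ∑ j, z j) :=
        mul_le_mul_of_nonneg_left (hb z hz) hw0
    _ = _ := by ring

/-- The key limit formula: for continuous `ψ` and positive `N₁,…,N_ρ`,
`lim_{t → t₀⁺} (t-t₀)^ρ ∫_{[0,a]^ρ} (∏ z_i^{N_i(t-t₀)-1}) ψ(t,z) dz
  = ψ(t₀,0) / ∏ N_i`. -/
theorem residue_limit_formula_real
    {ρ : ℕ} (hρ : 1 ≤ ρ) (N : Fin ρ → ℝ) (hN : ∀ i, 0 < N i)
    (a : ℝ) (ha : 0 < a) (t₀ : ℝ) (ψ : ℝ → (Fin ρ → ℝ) → ℂ)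
    (hψ : ContinuousOn (fun p : ℝ × (Fin ρ → ℝ) => ψ p.1 p.2)
      ((Set.Icc t₀ (t₀ + 1)) ×ˢ (Set.univ.pi fun _ : Fin ρ => Set.Icc (0 : ℝ) a))) :
    Tendsto (fun t : ℝ =>
        (((t - t₀) ^ ρ : ℝ) : ℂ) *
          ∫ z in Set.univ.pi fun _ : Fin ρ => Set.Icc (0 : ℝ) a,
            ((∏ i, z i ^ (N i * (t - t₀) - 1) : ℝ) : ℂ) * ψ t z)
      (𝓝[>] t₀) (𝓝 (ψ t₀ 0 / ((∏ i, N i : ℝ) : ℂ))) := by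
  have hshift : Tendsto (fun t : ℝ => t - t₀) (𝓝[>] t₀) (𝓝[>] 0) := by
    refine tendsto_nhdsWithin_iff.2 ⟨?_, ?_⟩
    · have : ContinuousAt (fun t : ℝ => t - t₀) t₀ := by fun_prop
      simpa using this.tendsto.mono_left nhdsWithin_le_nhds
    · filter_upwards [self_mem_nhdsWithin] with t ht
      exact sub_pos.2 (Set.mem_Ioi.1 ht)
  -- `P` is the rescaled mass of the weight, `Q` the sum of its rescaled first moments.
  set P : ℝ → ℝ := fun t => (t - t₀) ^ ρ * ∏ i, a ^ (N i * (t - t₀)) / (N i * (t - t₀)) with hP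
  set Q : ℝ → ℝ := fun t => (t - t₀) ^ ρ * ∑ j, ∏ i,
    a ^ (N i * (t - t₀) + if i = j then 1 else 0) /
      (N i * (t - t₀) + if i = j then 1 else 0) with hQ
  set p : ℝ := ∏ i, 1 / N i with hp
  have hp0 : 0 < p := Finset.prod_pos fun i _ => one_div_pos.2 (hN i)
  have hPlim : Tendsto P (𝓝[>] t₀) (𝓝 p) := by
    have := (tendsto_scaled_weight hN ha fun _ => 0).comp hshift
    simpa [Function.comp_def, hP, hp] using this
  have hQlim : Tendsto Q (𝓝[>] t₀) (𝓝 0) := by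
    have h1 : ∀ j : Fin ρ, Tendsto (fun t => (t - t₀) ^ ρ * ∏ i,
        a ^ (N i * (t - t₀) + if i = j then 1 else 0) /
          (N i * (t - t₀) + if i = j then 1 else 0)) (𝓝[>] t₀) (𝓝 0) := fun j => by
      have := (tendsto_scaled_weight hN ha fun i => if i = j then 1 else 0).comp hshift
      rwa [Finset.prod_eq_zero (Finset.mem_univ j) (by simp)] at this
    have h2 := tendsto_finsetSum Finset.univ fun j _ => h1 j
    simpa [hQ, Finset.mul_sum] using h2
  set F : ℝ → ℂ := fun t : ℝ => (((t - t₀) ^ ρ : ℝ) : ℂ) *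
          ∫ z in Set.univ.pi fun _ : Fin ρ => Set.Icc (0 : ℝ) a,
            ((∏ i, z i ^ (N i * (t - t₀) - 1) : ℝ) : ℂ) * ψ t z with hF
  have hdiff : Tendsto (fun t => F t - (P t : ℂ) * ψ t₀ 0) (𝓝[>] t₀) (𝓝 0) := by
    rw [Metric.tendsto_nhds]
    intro η hη
    -- `ε` is chosen so that `ε * p = η / 2`.
    obtain ⟨C, hC⟩ := exists_norm_sub_le ha hψ (ε := η / (2 * p)) (by positivity)
    have hlim : Tendsto (fun t => η / (2 * p) * P t + C * Q t) (𝓝[>] t₀)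
        (𝓝 (η / (2 * p) * p + C * 0)) := (hPlim.const_mul _).add (hQlim.const_mul _)
    have hlt : η / (2 * p) * p + C * 0 < η := by
      have : η / (2 * p) * p = η / 2 := by field_simp
      linarith
    filter_upwards [hC, hlim.eventually_lt_const hlt, Ioo_mem_nhdsGT (lt_add_one t₀)]
      with t hCt hη' ht
    refine lt_of_le_of_lt ?_ hη'
    have hs : 0 < t - t₀ := sub_pos.2 ht.1
    have hg : ContinuousOn (ψ t) (Set.univ.pi fun _ : Fin ρ => Set.Icc (0 : ℝ) a) :=
      hψ.comp (f := fun z => (t, z)) (by fun_prop) fun z hz => ⟨⟨ht.1.le, ht.2.le⟩, hz⟩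
    have key := norm_integral_weight_sub_le ha (r := fun i => N i * (t - t₀))
      (fun i => mul_pos (hN i) hs) hg hCt
    have hsρ : 0 ≤ (t - t₀) ^ ρ := by positivity
    have key' := mul_le_mul_of_nonneg_left key hsρ
    rw [dist_zero_right]
    calc ‖F t - (P t : ℂ) * ψ t₀ 0‖ = _ := ?_
      _ ≤ _ := key'
      _ = _ := by simp only [hP, hQ]; ring
    conv_rhs => rw [← Real.norm_of_nonneg hsρ, ← Complex.norm_real, ← norm_mul]
    simp only [hF, hP]
    push_cast
    congr 1
    ring
  have hmain : Tendsto (fun t => (P t : ℂ) * ψ t₀ 0) (𝓝[>] t₀) (𝓝 ((p : ℂ) * ψ t₀ 0)) :=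
    ((Complex.continuous_ofReal.tendsto p).comp hPlim).mul_const _
  have hval : ψ t₀ 0 / ((∏ i, N i : ℝ) : ℂ) = 0 + (p : ℂ) * ψ t₀ 0 := by
    simp [hp, div_eq_inv_mul]
  rw [hval]
  simpa using hdiff.add hmain
end
end

section
/- Let n ≥ 1 and let S ⊆ ℕⁿ be nonempty with 0 ∉ S. Let Γ ⊆ ℝⁿ be the convex hull of S + [0,∞)ⁿ and put t₀ = inf{t ≥ 0 : t·(1,…,1) ∈ Γ} (so 0 < t₀ < ∞). Let S* = {(α, 0) : α ∈ S} ∪ {(0,…,0,2)} ⊆ ℕ^{n+1}, let Γ* ⊆ ℝ^{n+1} be the convex hull of S* + [0,∞)^{n+1}, and put t₀* = inf{t ≥ 0 : t·(1,…,1) ∈ Γ*}. Then t₀* = 2 t₀ / (t₀ + 2); equivalently, setting s₀ = −1/t₀ and s₀* = −1/t₀*, one has s₀* = s₀ − 1/2. -/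
/-!
Write `Γ`, `Γ*` for the two Newton polyhedra. If `(u, …, u) ∈ Γ`, the segment from
`(u, …, u, 0)` to `(0, …, 0, 2)` lies in `Γ*` and meets the diagonal at height `2u / (u + 2)`
(`diag_mem_addSquare`); since this is increasing and continuous in `u`, it follows that
`t₀* ≤ 2t₀ / (t₀ + 2)`.

Conversely, splitting the generators of `Γ*` into those above some `(α, 0)` and those above
`(0, 2)`, every point of `Γ*` dominates some `(a p, 2b)` with `p ∈ Γ`, `a, b ≥ 0` and `a + b = 1`
(`exists_of_mem_addSquare`). For a diagonal point at height `t` this gives `2b ≤ t`, and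
`a t₀ ≤ t` because `Γ` is upward closed; together they give `2t₀ ≤ t (t₀ + 2)`.

Positivity of `t₀` comes from the bound `∑ xᵢ ≥ 1` on `Γ`.
-/

open MeasureTheory Filter Topology

noncomputable section

/-- The Newton polyhedron of a support set `S ⊆ ℕⁿ`: the convex hull of `S + [0,∞)ⁿ`. -/
def newtonPolyhedron {n : ℕ} (S : Set (Fin n → ℕ)) : Set (Fin n → ℝ) :=
  convexHull ℝ {x : Fin n → ℝ | ∃ α ∈ S, ∀ i, (α i : ℝ) ≤ x i}

/-- The Newton polyhedron is closed under increasing coordinates. -/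
lemma newtonPolyhedron_upward {n : ℕ} {S : Set (Fin n → ℕ)} {x y : Fin n → ℝ}
    (hx : x ∈ newtonPolyhedron S) (hxy : ∀ i, x i ≤ y i) : y ∈ newtonPolyhedron S := by
  have hsub : newtonPolyhedron S ⊆ {z | z + (y - x) ∈ newtonPolyhedron S} := by
    refine convexHull_min ?_ ?_
    · rintro z ⟨α, hα, hz⟩
      refine subset_convexHull ℝ _ ⟨α, hα, fun i => ?_⟩
      have h1 := hz i
      have h2 := hxy i
      simp only [Pi.add_apply, Pi.sub_apply]
      linarith
    · exact (convex_convexHull ℝ _).translate_preimage_left (y - x)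
  simpa using hsub hx

/-- Nonzero exponents have coordinate sum at least `1`, and this bound passes to the hull. -/
lemma one_le_sum_of_mem_newtonPolyhedron {n : ℕ} {S : Set (Fin n → ℕ)}
    (h0 : (0 : Fin n → ℕ) ∉ S) {x : Fin n → ℝ} (hx : x ∈ newtonPolyhedron S) :
    1 ≤ ∑ i, x i := by
  have hsub : newtonPolyhedron S ⊆ {z : Fin n → ℝ | 1 ≤ ∑ i, z i} := by
    refine convexHull_min ?_ ?_
    · rintro z ⟨α, hα, hz⟩
      have hne : α ≠ 0 := fun h => h0 (h ▸ hα)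
      obtain ⟨i, hi⟩ := Function.ne_iff.mp hne
      have h1 : 1 ≤ ∑ i, α i :=
        (Nat.one_le_iff_ne_zero.mpr hi).trans
          (Finset.single_le_sum (f := α) (fun _ _ => Nat.zero_le _) (Finset.mem_univ i))
      calc (1 : ℝ) ≤ ∑ i, (α i : ℝ) := by exact_mod_cast h1
        _ ≤ ∑ i, z i := Finset.sum_le_sum fun i _ => hz i
    · intro p hp q hq a b ha hb hab
      change 1 ≤ ∑ i, p i at hp
      change 1 ≤ ∑ i, q i at hq
      change 1 ≤ ∑ i, (a • p + b • q) i
      simp only [Pi.add_apply, Pi.smul_apply, smul_eq_mul,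
        Finset.sum_add_distrib, ← Finset.mul_sum]
      nlinarith
  exact hsub hx

/-- The support of `f + y²`, where `S` is the support of `f`. -/
def addSquareSupport {n : ℕ} (S : Set (Fin n → ℕ)) : Set (Fin (n + 1) → ℕ) :=
  (fun α : Fin n → ℕ => (Fin.snoc α 0 : Fin (n + 1) → ℕ)) '' S ∪
    {(Fin.snoc (0 : Fin n → ℕ) 2 : Fin (n + 1) → ℕ)}

/-- The point of `Γ*` on the segment from `(u, …, u, 0)` to `(0, …, 0, 2)` that lies on the
diagonal is at height `2u / (u + 2)`. -/
lemma diag_mem_addSquare {n : ℕ} {S : Set (Fin n → ℕ)} {u : ℝ} (hu : 0 ≤ u)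
    (h : (fun _ => u) ∈ newtonPolyhedron S) :
    (fun _ => 2 * u / (u + 2)) ∈ newtonPolyhedron (addSquareSupport S) := by
  have hsub : newtonPolyhedron S ⊆
      {x | (Fin.snoc x 0 : Fin (n + 1) → ℝ) ∈ newtonPolyhedron (addSquareSupport S)} := by
    refine convexHull_min ?_ ?_
    · rintro z ⟨α, hα, hz⟩
      refine subset_convexHull ℝ _ ⟨_, Or.inl ⟨α, hα, rfl⟩, fun i => ?_⟩
      refine Fin.lastCases ?_ (fun j => ?_) i
      · simp
      · simpa using hz j
    · intro p hp q hq a b ha hb hab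
      have key := convex_convexHull ℝ _ hp hq ha hb hab
      have e : (Fin.snoc (a • p + b • q) 0 : Fin (n + 1) → ℝ) =
          a • (Fin.snoc p 0 : Fin (n + 1) → ℝ) + b • (Fin.snoc q 0 : Fin (n + 1) → ℝ) := by
        ext i
        refine Fin.lastCases ?_ (fun j => ?_) i <;> simp
      exact (e ▸ key :)
  have h1 := hsub h
  have h2 : (Fin.snoc (fun _ => 0) 2 : Fin (n + 1) → ℝ) ∈
      newtonPolyhedron (addSquareSupport S) := by
    refine subset_convexHull ℝ _ ⟨_, Or.inr rfl, fun i => ?_⟩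
    refine Fin.lastCases ?_ (fun j => ?_) i <;> simp
  have hu2 : 0 < u + 2 := by linarith
  have key := convex_convexHull ℝ _ h1 h2 (a := 2 / (u + 2)) (b := u / (u + 2))
    (by positivity) (by positivity) (by field_simp; ring)
  have e : (fun _ => 2 * u / (u + 2) : Fin (n + 1) → ℝ) =
      (2 / (u + 2)) • (Fin.snoc (fun _ => u) 0 : Fin (n + 1) → ℝ) +
        (u / (u + 2)) • (Fin.snoc (fun _ => 0) 2 : Fin (n + 1) → ℝ) := by
    ext i
    refine Fin.lastCases ?_ (fun j => ?_) i
    · simp; ring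
    · simp; ring
  rw [e]
  exact key

/-- Every point of `Γ*` dominates a point `(a p, 2 b)` with `p ∈ Γ` and `a + b = 1`. -/
lemma exists_of_mem_addSquare {n : ℕ} {S : Set (Fin n → ℕ)} (hS : S.Nonempty)
    {x : Fin (n + 1) → ℝ} (hx : x ∈ newtonPolyhedron (addSquareSupport S)) :
    ∃ a b : ℝ, 0 ≤ a ∧ 0 ≤ b ∧ a + b = 1 ∧ 2 * b ≤ x (Fin.last n) ∧
      ∃ p ∈ newtonPolyhedron S, ∀ j, a * p j ≤ x (Fin.castSucc j) := by
  -- The generators split according to whether they dominate some `(α, 0)` or `(0, 2)`.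
  let A : Set (Fin (n + 1) → ℝ) :=
    {x | (∃ α ∈ S, ∀ j : Fin n, (α j : ℝ) ≤ x (Fin.castSucc j)) ∧ 0 ≤ x (Fin.last n)}
  let B : Set (Fin (n + 1) → ℝ) :=
    {x | (∀ j : Fin n, 0 ≤ x (Fin.castSucc j)) ∧ 2 ≤ x (Fin.last n)}
  have hgen : {x : Fin (n + 1) → ℝ | ∃ α ∈ addSquareSupport S, ∀ i, (α i : ℝ) ≤ x i} ⊆
      A ∪ B := by
    rintro z ⟨β, ⟨α, hα, rfl⟩ | rfl, hz⟩
    · exact Or.inl ⟨⟨α, hα, fun j => by simpa using hz (Fin.castSucc j)⟩,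
        by simpa using hz (Fin.last n)⟩
    · exact Or.inr ⟨fun j => by simpa using hz (Fin.castSucc j),
        by simpa using hz (Fin.last n)⟩
  have hA : A.Nonempty := by
    obtain ⟨α, hα⟩ := hS
    exact ⟨Fin.snoc (fun j => (α j : ℝ)) 0, ⟨α, hα, fun j => by simp⟩, by simp⟩
  have hB : B.Nonempty := ⟨fun _ => 2, fun _ => by norm_num, le_rfl⟩
  have hAsub : convexHull ℝ A ⊆
      {x | (fun j : Fin n => x (Fin.castSucc j)) ∈ newtonPolyhedron S ∧ 0 ≤ x (Fin.last n)} := by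
    refine convexHull_min (fun z hz => ⟨subset_convexHull ℝ _ hz.1, hz.2⟩) ?_
    intro y hy z hz a b ha hb hab
    refine ⟨convex_convexHull ℝ _ hy.1 hz.1 ha hb hab, ?_⟩
    have h1 := mul_nonneg ha hy.2
    have h2 := mul_nonneg hb hz.2
    simp only [Pi.add_apply, Pi.smul_apply, smul_eq_mul]
    linarith
  have hBsub : convexHull ℝ B ⊆ B := by
    refine convexHull_min subset_rfl ?_
    intro y hy z hz a b ha hb hab
    refine ⟨fun j => ?_, ?_⟩
    · have h1 := mul_nonneg ha (hy.1 j)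
      have h2 := mul_nonneg hb (hz.1 j)
      simp only [Pi.add_apply, Pi.smul_apply, smul_eq_mul]
      linarith
    · have h1 := mul_le_mul_of_nonneg_left hy.2 ha
      have h2 := mul_le_mul_of_nonneg_left hz.2 hb
      simp only [Pi.add_apply, Pi.smul_apply, smul_eq_mul]
      linarith
  have hx' := convexHull_mono hgen hx
  rw [convexHull_union hA hB, mem_convexJoin] at hx'
  obtain ⟨y, hy, z, hz, a, b, ha, hb, hab, rfl⟩ := hx'
  obtain ⟨hy1, hy2⟩ := hAsub hy
  obtain ⟨hz1, hz2⟩ := hBsub hz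
  refine ⟨a, b, ha, hb, hab, ?_, _, hy1, fun j => ?_⟩
  · have h1 := mul_nonneg ha hy2
    have h2 := mul_le_mul_of_nonneg_left hz2 hb
    simp only [Pi.add_apply, Pi.smul_apply, smul_eq_mul]
    linarith
  · have h2 := mul_nonneg hb (hz1 j)
    simp only [Pi.add_apply, Pi.smul_apply, smul_eq_mul]
    linarith

/-- Passing from `f(x)` to `f*(x,y) = f(x) + y²` changes the diagonal invariant by
`t₀* = 2t₀/(t₀+2)`, equivalently `s₀* = s₀ - 1/2`. -/
theorem add_square_newton_invariant
    {n : ℕ} (hn : 1 ≤ n) (S : Set (Fin n → ℕ)) (hS : S.Nonempty)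
    (h0 : (0 : Fin n → ℕ) ∉ S)
    (t₀ : ℝ) (ht₀ : t₀ = sInf {t : ℝ | 0 ≤ t ∧ (fun _ => t) ∈ newtonPolyhedron S})
    (Sstar : Set (Fin (n + 1) → ℕ))
    (hSstar : Sstar = (fun α : Fin n → ℕ => (Fin.snoc α 0 : Fin (n + 1) → ℕ)) '' S ∪ {(Fin.snoc (0 : Fin n → ℕ) 2 : Fin (n + 1) → ℕ)})
    (t₀s : ℝ)
    (ht₀s : t₀s = sInf {t : ℝ | 0 ≤ t ∧ (fun _ => t) ∈ newtonPolyhedron Sstar}) :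
    0 < t₀ ∧ t₀s = 2 * t₀ / (t₀ + 2) ∧ -1 / t₀s = -1 / t₀ - 1 / 2 := by
  change Sstar = addSquareSupport S at hSstar
  subst hSstar
  set T := {t : ℝ | 0 ≤ t ∧ (fun _ => t) ∈ newtonPolyhedron S}
  set Ts := {t : ℝ | 0 ≤ t ∧ (fun _ => t) ∈ newtonPolyhedron (addSquareSupport S)}
  have hT : T.Nonempty := by
    obtain ⟨α, hα⟩ := hS
    refine ⟨((∑ i, α i : ℕ) : ℝ), Nat.cast_nonneg _, subset_convexHull ℝ _ ⟨α, hα, fun i => ?_⟩⟩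
    exact Nat.cast_le.mpr <| Finset.single_le_sum (f := α) (fun _ _ => Nat.zero_le _) (Finset.mem_univ i)
  have hTbdd : BddBelow T := ⟨0, fun t ht => ht.1⟩
  have hTsbdd : BddBelow Ts := ⟨0, fun t ht => ht.1⟩
  have hmap : ∀ u ∈ T, 2 * u / (u + 2) ∈ Ts := by
    rintro u ⟨hu, h⟩
    exact ⟨by positivity, diag_mem_addSquare hu h⟩
  have hpos : 0 < t₀ := by
    have hn' : (0 : ℝ) < n := by exact_mod_cast hn
    have : 1 / (n : ℝ) ≤ t₀ := by
      rw [ht₀]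
      refine le_csInf hT fun t ht => ?_
      have h1 := one_le_sum_of_mem_newtonPolyhedron h0 ht.2
      rw [div_le_iff₀ hn']
      simpa [mul_comm] using h1
    exact lt_of_lt_of_le (by positivity) this
  have hle : ∀ u ∈ T, t₀s * (u + 2) ≤ 2 * u := by
    intro u hu
    have hu2 : 0 < u + 2 := by linarith [hu.1]
    have h1 : t₀s ≤ 2 * u / (u + 2) := ht₀s ▸ csInf_le hTsbdd (hmap u hu)
    rwa [le_div_iff₀ hu2] at h1
  have hlt2 : t₀s < 2 := by
    obtain ⟨u, hu⟩ := hT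
    have h1 := hle u hu
    have h2 := hu.1
    by_contra! h3
    nlinarith
  have hformula : t₀s = 2 * t₀ / (t₀ + 2) := by
    have ht2 : 0 < t₀ + 2 := by linarith
    apply le_antisymm
    · have h2 : 0 < 2 - t₀s := by linarith
      -- `u ↦ 2u / (u + 2)` is increasing with inverse `s ↦ 2s / (2 - s)`, so the bounds for
      -- `u ∈ T` pass to the infimum.
      have h1 : 2 * t₀s / (2 - t₀s) ≤ t₀ := by
        rw [ht₀]
        refine le_csInf hT fun u hu => ?_
        rw [div_le_iff₀ h2]
        linarith [hle u hu]
      rw [div_le_iff₀ h2] at h1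
      rw [le_div_iff₀ ht2]
      linarith
    · rw [ht₀s]
      obtain ⟨u, hu⟩ := hT
      refine le_csInf ⟨_, hmap u hu⟩ fun t ht => ?_
      obtain ⟨a, b, ha, hb, hab, hlast, p, hp, hpx⟩ := exists_of_mem_addSquare hS ht.2
      rw [div_le_iff₀ ht2]
      have hat : a * t₀ ≤ t := by
        rcases ha.eq_or_lt with rfl | ha
        · simpa using ht.1
        · have hmem : t / a ∈ T := by
            refine ⟨div_nonneg ht.1 ha.le, newtonPolyhedron_upward hp fun j => ?_⟩
            rw [le_div_iff₀ ha, mul_comm]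
            exact hpx j
          have h1 : t₀ ≤ t / a := ht₀ ▸ csInf_le hTbdd hmem
          rw [le_div_iff₀ ha] at h1
          linarith
      -- From `a t₀ ≤ t`, `2b ≤ t` and `a + b = 1`: `2 t₀ = 2a t₀ + 2b t₀ ≤ 2t + t t₀`.
      have h3 := mul_le_mul_of_nonneg_right hlast hpos.le
      have hb' : b = 1 - a := by linarith
      subst hb'
      linarith
  refine ⟨hpos, hformula, ?_⟩
  rw [hformula]
  field_simp
  ring
end
end

section
/- Let n ≥ 1, let Γ ⊆ ℝⁿ be a convex set with Γ + [0,∞)ⁿ ⊆ Γ, and let τ ⊆ Γ be a nonempty bounded extreme subset of Γ (i.e., τ is convex and whenever a point of τ lies in the open segment between two points of Γ, both of those points lie in τ). Then for every i ∈ {1,…,n}, the standard basis vector e_i does not lie in the linear span of the set of differences {x − y : x, y ∈ τ}; in particular, no two distinct points of τ differ by a nonzero multiple of e_i, and every coordinate projection ℝⁿ → ℝ^{n−1} forgetting one coordinate is injective on the affine span of τ. -/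
/-!
If two points of `τ` differed by a positive multiple of `e_i`, say `x = y + t e_i`, then `x` would
lie strictly between `y` and `y + (t + s) e_i` for every `s > 0`. The latter point is in `Γ` because
`Γ` absorbs the positive orthant, hence in `τ` by extremality, so `τ` would contain a ray and be
unbounded (`no_pos_smul_single`). Convexity of `τ` makes every element of the span of its
differences a nonnegative multiple of a single difference (`exists_smul_sub_of_mem_span`), so
`e_i` cannot lie in that span. The span is the direction of the affine span of `τ`, which gives
injectivity of the projections.
-/


open MeasureTheory Filter Topology

noncomputable section

/-- For a convex set, the cone over the set of differences is already a linear subspace. -/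
lemma exists_smul_sub_of_mem_span {E : Type*} [AddCommGroup E] [Module ℝ E] {τ : Set E}
    (hne : τ.Nonempty) (hτ : Convex ℝ τ) {d : E}
    (hd : d ∈ Submodule.span ℝ {d : E | ∃ x ∈ τ, ∃ y ∈ τ, d = x - y}) :
    ∃ c : ℝ, 0 ≤ c ∧ ∃ x ∈ τ, ∃ y ∈ τ, d = c • (x - y) := by
  induction hd using Submodule.span_induction with
  | mem d h =>
    obtain ⟨x, hx, y, hy, rfl⟩ := h
    exact ⟨1, zero_le_one, x, hx, y, hy, by simp⟩
  | zero =>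
    obtain ⟨x, hx⟩ := hne
    exact ⟨0, le_rfl, x, hx, x, hx, by simp⟩
  | add d d' _ _ h h' =>
    obtain ⟨c, hc, x, hx, y, hy, rfl⟩ := h
    obtain ⟨c', hc', x', hx', y', hy', rfl⟩ := h'
    rcases (add_nonneg hc hc').eq_or_lt with h0 | h0
    · have h1 : c = 0 := by linarith
      have h2 : c' = 0 := by linarith
      exact ⟨0, le_rfl, x, hx, x, hx, by simp [h1, h2]⟩
    · have hsum : c / (c + c') + c' / (c + c') = 1 := by field_simp
      refine ⟨c + c', h0.le, _, hτ hx hx' (div_nonneg hc h0.le) (div_nonneg hc' h0.le) hsum,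
        _, hτ hy hy' (div_nonneg hc h0.le) (div_nonneg hc' h0.le) hsum, ?_⟩
      have e1 : (c + c') * (c / (c + c')) = c := by field_simp
      have e2 : (c + c') * (c' / (c + c')) = c' := by field_simp
      simp only [smul_sub, smul_add, smul_smul, e1, e2]
      abel
  | smul a d _ h =>
    obtain ⟨c, hc, x, hx, y, hy, rfl⟩ := h
    rcases le_total 0 a with ha | ha
    · exact ⟨a * c, mul_nonneg ha hc, x, hx, y, hy, smul_smul _ _ _⟩
    · refine ⟨-a * c, mul_nonneg (neg_nonneg.2 ha) hc, y, hy, x, hx, ?_⟩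
      rw [smul_smul, neg_mul, neg_smul, ← smul_neg, neg_sub]

/-- A bounded extreme subset of a set absorbing the positive orthant has no two points that differ
by a positive multiple of a basis vector: otherwise it would contain a ray. -/
lemma no_pos_smul_single {n : ℕ} {Γ τ : Set (Fin n → ℝ)}
    (hrec : ∀ y ∈ Γ, ∀ v : Fin n → ℝ, (∀ i, 0 ≤ v i) → y + v ∈ Γ)
    (hbdd : Bornology.IsBounded τ) (hext : IsExtreme ℝ Γ τ) (i : Fin n)
    {x y : Fin n → ℝ} (hx : x ∈ τ) (hy : y ∈ τ) {t : ℝ} (ht : 0 < t)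
    (hxy : x - y = t • (Pi.single i (1 : ℝ) : Fin n → ℝ)) : False := by
  have key : ∀ s : ℝ, 0 < s → y + (t + s) • (Pi.single i (1 : ℝ) : Fin n → ℝ) ∈ τ := by
    intro s hs
    have hts : 0 < t + s := add_pos ht hs
    have hΓ : y + (t + s) • (Pi.single i (1 : ℝ) : Fin n → ℝ) ∈ Γ :=
      hrec y (hext.subset hy) _ fun k =>
        mul_nonneg hts.le ((Pi.single_nonneg.2 zero_le_one : (0 : Fin n → ℝ) ≤ Pi.single i 1) k)
    refine hext.right_mem_of_mem_openSegment (hext.subset hy) hΓ hx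
      ⟨s / (t + s), t / (t + s), div_pos hs hts, div_pos ht hts, by field_simp; ring, ?_⟩
    have e1 : s / (t + s) + t / (t + s) = 1 := by field_simp; ring
    have e2 : t / (t + s) * (t + s) = t := by field_simp
    rw [smul_add, ← add_assoc, ← add_smul, e1, smul_smul, e2, one_smul, ← hxy]
    abel
  obtain ⟨R, hR⟩ := hbdd.exists_norm_le
  -- This `s` makes the `i`-th coordinate of the point at least `R + t`, beyond the bound `R`.
  have h1 := hR _ (key (|R| + |y i| + 1) (by positivity))
  have h2 := (norm_le_pi_norm _ i).trans h1
  have h3 := (Real.le_norm_self _).trans h2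
  simp only [Pi.add_apply, Pi.smul_apply, Pi.single_eq_same, smul_eq_mul, mul_one] at h3
  linarith [le_abs_self R, neg_abs_le (y i)]

/-- A bounded (compact) face of a Newton-type polyhedron (a convex set whose recession
cone contains the positive orthant) is parallel to no coordinate axis: no standard basis
vector lies in the span of its differences, no two of its points differ by a multiple of
a standard basis vector, and every coordinate projection forgetting one coordinate is
injective on its affine span. -/
theorem compact_face_not_parallel_to_axes
    {n : ℕ} (hn : 1 ≤ n) (Γ : Set (Fin n → ℝ)) (hconv : Convex ℝ Γ)
    (hrec : ∀ y ∈ Γ, ∀ v : Fin n → ℝ, (∀ i, 0 ≤ v i) → y + v ∈ Γ)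
    (τ : Set (Fin n → ℝ)) (hne : τ.Nonempty) (hτconv : Convex ℝ τ)
    (hbdd : Bornology.IsBounded τ) (hext : IsExtreme ℝ Γ τ) :
    (∀ i : Fin n,
      Pi.single i (1 : ℝ) ∉ Submodule.span ℝ {d : Fin n → ℝ | ∃ x ∈ τ, ∃ y ∈ τ, d = x - y}) ∧
    (∀ i : Fin n, ∀ x ∈ τ, ∀ y ∈ τ, ∀ c : ℝ, x - y = c • (Pi.single i (1 : ℝ) : Fin n → ℝ) → x = y) ∧
    (∀ i : Fin n, Set.InjOn (fun y : Fin n → ℝ => fun k : {k : Fin n // k ≠ i} => y k)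
      (affineSpan ℝ τ : Set (Fin n → ℝ))) := by
  have hspan : ∀ i : Fin n,
      Pi.single i (1 : ℝ) ∉
        Submodule.span ℝ {d : Fin n → ℝ | ∃ x ∈ τ, ∃ y ∈ τ, d = x - y} := by
    intro i hi
    obtain ⟨c, hc, x, hx, y, hy, h⟩ := exists_smul_sub_of_mem_span hne hτconv hi
    have hc0 : c ≠ 0 := by
      rintro rfl
      simpa using congrFun h i
    have hcpos : 0 < c := hc.lt_of_ne' hc0
    refine no_pos_smul_single hrec hbdd hext i hx hy (inv_pos.2 hcpos) ?_
    rw [h, inv_smul_smul₀ hc0]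
  refine ⟨hspan, ?_, ?_⟩
  · intro i x hx y hy c h
    rcases lt_trichotomy c 0 with hc | rfl | hc
    · refine (no_pos_smul_single hrec hbdd hext i hy hx (neg_pos.2 hc) ?_).elim
      rw [neg_smul, ← h, neg_sub]
    · rwa [zero_smul, sub_eq_zero] at h
    · exact (no_pos_smul_single hrec hbdd hext i hx hy hc h).elim
  · intro i a ha b hb hab
    by_contra hne'
    have hk : ∀ k, k ≠ i → a k = b k := fun k hk => congrFun hab ⟨k, hk⟩
    have hi : a i - b i ≠ 0 := by
      refine fun h0 => hne' (funext fun k => ?_)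
      by_cases h : k = i
      · rw [h]
        exact sub_eq_zero.1 h0
      · exact hk k h
    have hdiff : a - b = (a i - b i) • (Pi.single i (1 : ℝ) : Fin n → ℝ) := by
      funext k
      by_cases h : k = i
      · subst h
        simp
      · simp [h, hk k h]
    have hset : (τ -ᵥ τ : Set (Fin n → ℝ)) =
        {d : Fin n → ℝ | ∃ x ∈ τ, ∃ y ∈ τ, d = x - y} := by
      ext d
      simp [Set.mem_vsub, eq_comm]
    have hmem := AffineSubspace.vsub_mem_direction ha hb
    rw [direction_affineSpan, vectorSpan_def, hset, vsub_eq_sub, hdiff] at hmem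
    exact hspan i ((Submodule.smul_mem_iff _ hi).1 hmem)
end
end
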